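/- arXiv:0911.4941 — 9 statements merged into one kernel-verified Lean document; each statement's English description precedes it below -/
import Mathlib

section
/- Let p be a prime, R a commutative ring containing 𝔽_p equipped with a Frobenius splitting φ, I an ideal compatibly split by φ, and J an arbitrary ideal of R. Then the colon ideal I : J = {r ∈ R : rJ ⊆ I} is compatibly split by φ. In particular, every minimal prime ideal over I is compatibly split by φ. -/
/-- A Frobenius splitting of a commutative ring `R` (containing `𝔽_p`) is an additive map
`φ : R → R` with `φ (a^p * b) = a * φ b` and `φ 1 = 1`. -/
def IsFrobeniusSplitting (p : ℕ) {R : Type*} [CommRing R] (φ : R → R) : Prop :=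
  (∀ a b : R, φ (a + b) = φ a + φ b) ∧ (∀ a b : R, φ (a ^ p * b) = a * φ b) ∧ φ 1 = 1

/-- if `I` is compatibly split and `J` is arbitrary, then the colon ideal
`I : J = {r | r • J ⊆ I}` is compatibly split; in particular every minimal prime over `I`
is compatibly split. -/
theorem stmt_3 {p : ℕ} (hp : p.Prime) {R : Type*} [CommRing R] [CharP R p]
    (φ : R → R) (hφ : IsFrobeniusSplitting p φ) (I J : Ideal R)
    (hI : ∀ r ∈ I, φ r ∈ I) :
    (∀ r ∈ I.colon J, φ r ∈ I.colon J) ∧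
      ∀ P ∈ I.minimalPrimes, ∀ r ∈ P, φ r ∈ P := by
  obtain ⟨-, hmul, h1⟩ := hφ
  constructor
  · intro r hr
    rw [Submodule.mem_colon] at hr ⊢
    intro j hj
    have h := hI _ (hr (j ^ p) (Ideal.pow_mem_of_mem J hj p hp.pos))
    rw [smul_eq_mul, mul_comm, hmul] at h
    rwa [smul_eq_mul, mul_comm]
  · intro P hP r hr
    have hPp : P.IsPrime := hP.1.1
    have hrad : I.IsRadical := by
      rw [Ideal.isRadical_iff_pow_one_lt p hp.one_lt]
      intro x hx
      have h := hI _ hx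
      rwa [← mul_one (x ^ p), hmul, h1, mul_one] at h
    obtain ⟨s, hs, n, hn⟩ : ∃ s, s ∉ P ∧ ∃ n : ℕ, s * r ^ n ∈ I := by
      by_contra hcon
      push Not at hcon
      have hdis : Disjoint (I : Set R)
          ((P.primeCompl ⊔ Submonoid.powers r : Submonoid R) : Set R) := by
        rw [Set.disjoint_left]
        intro x hx hxM
        obtain ⟨s, hs, _, ⟨n, rfl⟩, rfl⟩ := Submonoid.mem_sup.mp hxM
        exact hcon s hs n hx
      obtain ⟨Q, hQ, hIQ, hQd⟩ := Ideal.exists_le_prime_disjoint I _ hdis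
      rw [Set.disjoint_left] at hQd
      have hQP : Q ≤ P := by
        intro x hx
        by_contra hxP
        exact hQd hx (Submonoid.mem_sup_left (S := P.primeCompl) hxP)
      exact hQd (hP.2 ⟨hQ, hIQ⟩ hQP hr)
        (Submonoid.mem_sup_right (Submonoid.mem_powers r))
    have hsr : s * r ∈ I := hrad ⟨n + 1, by
      have : (s * r) ^ (n + 1) = (s ^ n * r) * (s * r ^ n) := by ring
      rw [this]
      exact I.mul_mem_left _ hn⟩
    have h2 : s ^ p * r ∈ I := by
      obtain ⟨k, rfl⟩ := Nat.exists_eq_succ_of_ne_zero hp.ne_zero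
      rw [pow_succ, mul_assoc]
      exact I.mul_mem_left _ hsr
    have h3 := hP.1.2 (hI _ h2)
    rw [hmul] at h3
    exact (hPp.mem_or_mem h3).resolve_left hs
end

section
/- Let p be a prime and R a commutative ring containing 𝔽_p. Let φ : R → R be a near-splitting such that φ(1) is not a zero divisor in R. Then R is reduced; moreover, if I and J are ideals compatibly near-split by φ then I ∩ J and I + J are compatibly near-split by φ, and for I compatibly near-split and J an arbitrary ideal the colon ideal I : J = {r ∈ R : rJ ⊆ I} is compatibly near-split by φ. -/
/-- A (Frobenius) near-splitting of a commutative ring `R` (containing `𝔽_p`) is an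
additive map `φ : R → R` with `φ (a^p * b) = a * φ b`. -/
def IsFrobeniusNearSplitting (p : ℕ) {R : Type*} [CommRing R] (φ : R → R) : Prop :=
  (∀ a b : R, φ (a + b) = φ a + φ b) ∧ (∀ a b : R, φ (a ^ p * b) = a * φ b)

/-- if `φ` is a near-splitting with `φ 1` a non-zerodivisor, then `R` is
reduced; intersections and sums of compatibly near-split ideals are compatibly near-split;
and colon ideals `I : J` of a compatibly near-split ideal `I` by an arbitrary ideal `J`
are compatibly near-split. -/
theorem stmt_4 {p : ℕ} (hp : p.Prime) {R : Type*} [CommRing R] [CharP R p]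
    (φ : R → R) (hφ : IsFrobeniusNearSplitting p φ)
    (hφ1 : φ 1 ∈ nonZeroDivisors R) :
    IsReduced R ∧
      (∀ I J : Ideal R, (∀ r ∈ I, φ r ∈ I) → (∀ r ∈ J, φ r ∈ J) →
        (∀ r ∈ I ⊓ J, φ r ∈ I ⊓ J) ∧ (∀ r ∈ I + J, φ r ∈ I + J)) ∧
      (∀ I J : Ideal R, (∀ r ∈ I, φ r ∈ I) →
        ∀ r ∈ I.colon J, φ r ∈ I.colon J) := by
  obtain ⟨hadd, hmul⟩ := hφ
  have h0 : φ 0 = 0 := by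
    have := hadd 0 0
    simpa using this
  refine ⟨?_, ?_, ?_⟩
  · rw [isReduced_iff_pow_one_lt p hp.one_lt]
    intro a ha
    have h := hmul a 1
    rw [ha, zero_mul, h0] at h
    exact (mul_right_mem_nonZeroDivisors_eq_zero_iff hφ1).1 h.symm
  · intro I J hI hJ
    refine ⟨fun r hr => ⟨hI r hr.1, hJ r hr.2⟩, fun r hr => ?_⟩
    obtain ⟨x, hx, y, hy, rfl⟩ := Submodule.mem_sup.1 hr
    rw [hadd]
    exact Submodule.add_mem_sup (hI x hx) (hJ y hy)
  · intro I J hI r hr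
    rw [Submodule.mem_colon] at hr ⊢
    intro s hs
    have h1 : s ^ p * r ∈ I := by
      have h2 := I.mul_mem_left (s ^ (p - 1)) (hr s hs)
      rw [smul_eq_mul, mul_left_comm, ← pow_succ, Nat.sub_add_cancel hp.one_le, mul_comm] at h2
      exact h2
    have h3 := hI _ h1
    rw [hmul, mul_comm] at h3
    exact h3
end

section
/- Let p be a prime, n ≥ 1, and f ∈ 𝔽_p[x₁,…,xₙ]. (1) If Tr(f^{p−1}) is a unit of 𝔽_p[x₁,…,xₙ], i.e. a nonzero constant, and c ∈ 𝔽_p is its inverse, then the map g ↦ c·Tr(f^{p−1}·g) is a Frobenius splitting of 𝔽_p[x₁,…,xₙ]. (2) The principal ideal ⟨f⟩ is compatibly near-split by the near-splitting g ↦ Tr(f^{p−1}·g); in particular, if c·Tr(f^{p−1}) = 1 then ⟨f⟩ is compatibly split by the Frobenius splitting g ↦ c·Tr(f^{p−1}·g). -/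
open MvPolynomial

/-- The near-splitting `Tr` on `𝔽_p[x₁,…,xₙ]`: on a monomial `∏ xᵢ^{eᵢ}` it gives
`∏ xᵢ^{(eᵢ+1)/p - 1}` if `p ∣ eᵢ + 1` for all `i`, and `0` otherwise, extended
`𝔽_p`-linearly (note that `c^{1/p} = c` for `c ∈ 𝔽_p`). -/
noncomputable def Tr (p n : ℕ) (g : MvPolynomial (Fin n) (ZMod p)) :
    MvPolynomial (Fin n) (ZMod p) :=
  ∑ m ∈ g.support,
    if ∀ i, p ∣ (m i + 1) then
      monomial (Finsupp.equivFunOnFinite.symm fun i => (m i + 1) / p - 1) (g.coeff m)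
    else 0

/-- The summand of `Tr` at exponent `m` and coefficient `c`. -/
noncomputable def trTerm (p n : ℕ) (m : Fin n →₀ ℕ) (c : ZMod p) :
    MvPolynomial (Fin n) (ZMod p) :=
  if ∀ i, p ∣ (m i + 1) then
    monomial (Finsupp.equivFunOnFinite.symm fun i => (m i + 1) / p - 1) c
  else 0

lemma trTerm_add (p n : ℕ) (m : Fin n →₀ ℕ) (c d : ZMod p) :
    trTerm p n m (c + d) = trTerm p n m c + trTerm p n m d := by
  unfold trTerm
  split_ifs <;> simp

lemma trTerm_zero (p n : ℕ) (m : Fin n →₀ ℕ) : trTerm p n m 0 = 0 := by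
  unfold trTerm
  split_ifs <;> simp

lemma Tr_eq_of_subset (p n : ℕ) (g : MvPolynomial (Fin n) (ZMod p))
    (s : Finset (Fin n →₀ ℕ)) (h : g.support ⊆ s) :
    Tr p n g = ∑ m ∈ s, trTerm p n m (g.coeff m) := by
  have h0 : Tr p n g = ∑ m ∈ g.support, trTerm p n m (g.coeff m) := rfl
  rw [h0]
  apply Finset.sum_subset h
  intro m _ hm
  rw [MvPolynomial.notMem_support_iff.mp hm, trTerm_zero]

lemma Tr_add (p n : ℕ) (a b : MvPolynomial (Fin n) (ZMod p)) :
    Tr p n (a + b) = Tr p n a + Tr p n b := by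
  classical
  rw [Tr_eq_of_subset p n (a + b) _ MvPolynomial.support_add,
    Tr_eq_of_subset p n a (a.support ∪ b.support) Finset.subset_union_left,
    Tr_eq_of_subset p n b (a.support ∪ b.support) Finset.subset_union_right,
    ← Finset.sum_add_distrib]
  exact Finset.sum_congr rfl fun m _ => by rw [coeff_add, trTerm_add]

lemma Tr_monomial (p n : ℕ) (m : Fin n →₀ ℕ) (c : ZMod p) :
    Tr p n (monomial m c) = trTerm p n m c := by
  rw [Tr_eq_of_subset p n _ {m} MvPolynomial.support_monomial_subset]
  simp

lemma trTerm_mul {p : ℕ} (hp : p.Prime) (n : ℕ) (k m : Fin n →₀ ℕ) (c d : ZMod p) :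
    trTerm p n (p • k + m) (c * d) = monomial k c * trTerm p n m d := by
  have hiff : (∀ i, p ∣ ((p • k + m) i + 1)) ↔ ∀ i, p ∣ (m i + 1) := by
    refine forall_congr' fun i => ?_
    have : (p • k + m) i + 1 = p * k i + (m i + 1) := by simp [add_assoc]
    rw [this]
    exact Nat.dvd_add_right (Dvd.intro _ rfl)
  unfold trTerm
  by_cases h : ∀ i, p ∣ (m i + 1)
  · rw [if_pos h, if_pos (hiff.mpr h), monomial_mul]
    congr 2
    ext i
    have e : (p • k + m) i + 1 = (m i + 1) + p * k i := by
      simp only [Finsupp.add_apply, Finsupp.smul_apply, smul_eq_mul]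
      ring
    have h1 : 1 ≤ (m i + 1) / p :=
      (Nat.one_le_div_iff hp.pos).mpr (Nat.le_of_dvd (Nat.succ_pos _) (h i))
    simp only [Finsupp.equivFunOnFinite_symm_apply_apply, Finsupp.add_apply (g₁ := k)] at *
    rw [e, Nat.add_mul_div_left _ _ hp.pos]
    omega
  · rw [if_neg h, if_neg (fun h' => h (hiff.mp h')), mul_zero]

lemma Tr_pow_mul {p : ℕ} (hp : p.Prime) (n : ℕ) (a b : MvPolynomial (Fin n) (ZMod p)) :
    Tr p n (a ^ p * b) = a * Tr p n b := by
  have : Fact p.Prime := ⟨hp⟩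
  induction a using MvPolynomial.induction_on' with
  | add a₁ a₂ h₁ h₂ => rw [add_pow_char, add_mul, Tr_add, h₁, h₂, add_mul]
  | monomial k c =>
    induction b using MvPolynomial.induction_on' with
    | add b₁ b₂ h₁ h₂ => rw [mul_add, Tr_add, h₁, h₂, Tr_add, mul_add]
    | monomial m d =>
      rw [monomial_pow, ZMod.pow_card, monomial_mul, Tr_monomial, Tr_monomial, trTerm_mul hp]

lemma Tr_mem {p : ℕ} (hp : p.Prime) (n : ℕ) (f g : MvPolynomial (Fin n) (ZMod p))
    (hg : g ∈ Ideal.span {f}) : Tr p n (f ^ (p - 1) * g) ∈ Ideal.span {f} := by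
  obtain ⟨h, rfl⟩ := Ideal.mem_span_singleton'.mp hg
  have : f ^ (p - 1) * (h * f) = f ^ p * h := by
    rw [mul_comm h f, ← mul_assoc, ← pow_succ, Nat.sub_add_cancel hp.one_le]
  rw [this, Tr_pow_mul hp]
  exact Ideal.mul_mem_right _ _ (Ideal.mem_span_singleton_self f)

/-- (1) if `Tr(f^{p-1})` is a (constant) unit with inverse `c`, then
`g ↦ c·Tr(f^{p-1}·g)` is a Frobenius splitting; (2) `⟨f⟩` is compatibly near-split by
`g ↦ Tr(f^{p-1}·g)`, and compatibly split by `g ↦ c·Tr(f^{p-1}·g)` when `c·Tr(f^{p-1}) = 1`. -/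
theorem stmt_6 {p : ℕ} (hp : p.Prime) {n : ℕ} (hn : 1 ≤ n)
    (f : MvPolynomial (Fin n) (ZMod p)) :
    (∀ g ∈ Ideal.span {f}, Tr p n (f ^ (p - 1) * g) ∈ Ideal.span {f}) ∧
      ∀ c : ZMod p, C c * Tr p n (f ^ (p - 1)) = 1 →
        IsFrobeniusSplitting p (fun g => C c * Tr p n (f ^ (p - 1) * g)) ∧
          ∀ g ∈ Ideal.span {f}, C c * Tr p n (f ^ (p - 1) * g) ∈ Ideal.span {f} := by
  refine ⟨fun g hg => Tr_mem hp n f g hg, fun c hc => ⟨⟨?_, ?_, ?_⟩, fun g hg =>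
    Ideal.mul_mem_left _ _ (Tr_mem hp n f g hg)⟩⟩
  · intro a b
    simp only [mul_add, Tr_add]
  · intro a b
    simp only []
    rw [mul_left_comm, Tr_pow_mul hp, mul_left_comm]
  · simpa using hc
end

section
/- Let p be a prime and n ≥ 1. The standard splitting φ(g) := Tr((x₁⋯xₙ)^{p−1}·g) is a Frobenius splitting of 𝔽_p[x₁,…,xₙ], and an ideal I of 𝔽_p[x₁,…,xₙ] is compatibly split by φ if and only if I is a squarefree monomial (Stanley–Reisner) ideal. -/
open MvPolynomial

/-- A squarefree monomial (Stanley–Reisner) ideal: one generated by a set of squarefree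
monomials `∏_{i ∈ s} xᵢ`. -/
def IsSqfreeMonomialIdeal {R : Type*} [CommRing R] {n : ℕ}
    (I : Ideal (MvPolynomial (Fin n) R)) : Prop :=
  ∃ S : Set (Finset (Fin n)),
    I = Ideal.span ((fun s : Finset (Fin n) => ∏ i ∈ s, (X i : MvPolynomial (Fin n) R)) '' S)

/-- Exponent vector of the squarefree monomial attached to `s`. -/
noncomputable def sqInd {n : ℕ} (s : Finset (Fin n)) : Fin n →₀ ℕ :=
  ∑ i ∈ s, Finsupp.single i 1

lemma sqInd_apply {n : ℕ} (s : Finset (Fin n)) (j : Fin n) :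
    sqInd s j = if j ∈ s then 1 else 0 := by
  simp [sqInd, Finsupp.finset_sum_apply, Finsupp.single_apply]

lemma prod_X_eq {R : Type*} [CommRing R] {n : ℕ} (s : Finset (Fin n)) :
    ∏ i ∈ s, (X i : MvPolynomial (Fin n) R) = monomial (sqInd s) 1 := by
  rw [sqInd, monomial_sum_one]
  rfl

lemma coeff_Tr {p : ℕ} (hp : p.Prime) {n : ℕ} (g : MvPolynomial (Fin n) (ZMod p))
    (m : Fin n →₀ ℕ) :
    coeff m (Tr p n g) = coeff (p • m + (p - 1) • sqInd Finset.univ) g := by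
  have hp0 := hp.pos
  rw [Tr, coeff_sum]
  have key : ∀ u : Fin n →₀ ℕ, coeff m (if ∀ i, p ∣ (u i + 1) then
      monomial (Finsupp.equivFunOnFinite.symm fun i => (u i + 1) / p - 1) (g.coeff u)
      else 0) = if u = p • m + (p - 1) • sqInd Finset.univ then coeff u g else 0 := by
    intro u
    by_cases hu : u = p • m + (p - 1) • sqInd Finset.univ
    · have h1 : ∀ i, u i + 1 = p * (m i + 1) := by
        intro i
        rw [hu]
        simp [sqInd_apply]
        rw [mul_add]; omega
      rw [if_pos (fun i => ⟨_, h1 i⟩), if_pos hu, coeff_monomial, if_pos]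
      ext i
      simp [h1, Nat.mul_div_cancel_left _ hp0]
    · rw [if_neg hu]
      split_ifs with h
      · rw [coeff_monomial, if_neg]
        intro h2
        apply hu
        ext i
        obtain ⟨k, hk⟩ := h i
        have h3 := DFunLike.congr_fun h2 i
        simp [hk, Nat.mul_div_cancel_left _ hp0] at h3
        have hk0 : k ≠ 0 := by rintro rfl; simp at hk
        obtain ⟨l, rfl⟩ := Nat.exists_eq_succ_of_ne_zero hk0
        simp at h3
        subst h3
        simp [sqInd_apply]
        rw [Nat.succ_eq_add_one, mul_add] at hk
        omega
      · simp
  simp_rw [key]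
  rw [Finset.sum_ite_eq']
  split_ifs with h
  · rfl
  · exact (notMem_support_iff.mp h).symm

/-- The standard splitting. -/
noncomputable def stdPhi (p n : ℕ) (g : MvPolynomial (Fin n) (ZMod p)) :
    MvPolynomial (Fin n) (ZMod p) :=
  Tr p n ((∏ i, (X i : MvPolynomial (Fin n) (ZMod p))) ^ (p - 1) * g)

lemma coeff_stdPhi {p : ℕ} (hp : p.Prime) {n : ℕ} (g : MvPolynomial (Fin n) (ZMod p))
    (m : Fin n →₀ ℕ) : coeff m (stdPhi p n g) = coeff (p • m) g := by
  rw [stdPhi, coeff_Tr hp, prod_X_eq, monomial_pow, one_pow, add_comm (p • m),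
    coeff_monomial_mul, one_mul]

lemma coeff_stdPhi_iter {p : ℕ} (hp : p.Prime) {n : ℕ} (e : ℕ)
    (g : MvPolynomial (Fin n) (ZMod p))
    (m : Fin n →₀ ℕ) : coeff m ((stdPhi p n)^[e] g) = coeff (p ^ e • m) g := by
  induction e generalizing g with
  | zero => simp
  | succ e ih => rw [Function.iterate_succ_apply, ih, coeff_stdPhi hp, smul_smul, pow_succ']

lemma stdPhi_add {p : ℕ} (hp : p.Prime) {n : ℕ} (a b : MvPolynomial (Fin n) (ZMod p)) :
    stdPhi p n (a + b) = stdPhi p n a + stdPhi p n b := by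
  ext m
  simp [coeff_stdPhi hp]

lemma stdPhi_pow_mul {p : ℕ} (hp : p.Prime) {n : ℕ} (a b : MvPolynomial (Fin n) (ZMod p)) :
    stdPhi p n (a ^ p * b) = a * stdPhi p n b := by
  haveI := Fact.mk hp
  induction a using MvPolynomial.induction_on' with
  | monomial u c =>
    ext m
    rw [coeff_stdPhi hp, monomial_pow, coeff_monomial_mul', coeff_monomial_mul',
      coeff_stdPhi hp, ZMod.pow_card]
    have : p • u ≤ p • m ↔ u ≤ m := by
      simp [Finsupp.le_def, hp.pos]
    simp only [this]
    congr 3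
    ext i
    simp [Nat.mul_sub]
  | add a a' ha ha' =>
    rw [add_pow_char, add_mul, stdPhi_add hp, ha, ha', add_mul]

lemma stdPhi_one {p : ℕ} (hp : p.Prime) {n : ℕ} : stdPhi p n 1 = 1 := by
  ext m
  rw [coeff_stdPhi hp, coeff_one, coeff_one]
  have : 0 = p • m ↔ 0 = m := by
    rw [eq_comm, eq_comm (a := 0), smul_eq_zero]
    simp [hp.ne_zero]
  simp only [this]

lemma mem_span_sq {R : Type*} [CommRing R] {n : ℕ} (S : Set (Finset (Fin n)))
    (g : MvPolynomial (Fin n) R) :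
    g ∈ Ideal.span ((fun s : Finset (Fin n) => ∏ i ∈ s, (X i : MvPolynomial (Fin n) R)) '' S)
      ↔ ∀ u ∈ g.support, ∃ s ∈ S, sqInd s ≤ u := by
  have : ((fun s : Finset (Fin n) => ∏ i ∈ s, (X i : MvPolynomial (Fin n) R)) '' S)
      = (fun u => monomial u (1 : R)) '' (sqInd '' S) := by
    rw [Set.image_image]
    simp only [prod_X_eq]
  rw [this, mem_ideal_span_monomial_image]
  simp

lemma stdPhi_sq_mem {p : ℕ} (hp : p.Prime) {n : ℕ}
    (I : Ideal (MvPolynomial (Fin n) (ZMod p))) (h : ∀ g ∈ I, stdPhi p n g ∈ I)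
    (g : MvPolynomial (Fin n) (ZMod p)) (hg : g ∈ I) (u : Fin n →₀ ℕ) (hu : u ∈ g.support) :
    (monomial (sqInd u.support) 1 : MvPolynomial (Fin n) (ZMod p)) ∈ I := by
  haveI := Fact.mk hp
  obtain ⟨q, e, hqe, hq⟩ : ∃ q e, q = p ^ e ∧ ∀ v ∈ g.support, ∀ i, v i < q := by
    refine ⟨_, g.totalDegree, rfl, fun v hv i => ?_⟩
    refine lt_of_le_of_lt ?_ (Nat.lt_pow_self hp.one_lt)
    refine le_trans ?_ (le_totalDegree hv)
    by_cases hi : i ∈ v.support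
    · exact Finset.single_le_sum (f := fun i => v i) (fun _ _ => Nat.zero_le _) hi
    · rw [Finsupp.notMem_support_iff.mp hi]; exact Nat.zero_le _
  have hit : ∀ e, ∀ f ∈ I, (stdPhi p n)^[e] f ∈ I := by
    intro e
    induction e with
    | zero => intro f hf; simpa using hf
    | succ e ih => intro f hf; rw [Function.iterate_succ_apply]; exact ih _ (h _ hf)
  have hle : u ≤ q • sqInd u.support := by
    intro i
    have := hq u hu i
    by_cases hi : u i = 0 <;> simp [sqInd_apply, hi]
    omega
  have hmem := hit e _ (I.mul_mem_left
    (monomial (q • sqInd u.support - u) (coeff u g)⁻¹) hg)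
  convert hmem using 1
  ext m
  rw [coeff_stdPhi_iter hp, ← hqe, coeff_monomial_mul', coeff_monomial]
  split_ifs with h1 h2 h2
  · subst h1
    rw [tsub_tsub_cancel_of_le hle]
    exact (inv_mul_cancel₀ (mem_support_iff.mp hu)).symm
  · subst h1
    exact absurd tsub_le_self h2
  · symm
    rw [mul_eq_zero]
    right
    by_contra hne
    apply h1
    have hv := mem_support_iff.mpr hne
    ext i
    have h3 := hq _ hv i
    have h4 := hq u hu i
    have h5 := h2 i
    have h6 := hle i
    simp [sqInd_apply] at h3 h5 h6 ⊢
    by_cases hi : u i = 0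
    · simp [hi] at h3 ⊢
      rcases Nat.eq_zero_or_pos (m i) with h0 | h0
      · exact h0.symm
      · nlinarith
    · simp [hi] at h3 h5 ⊢
      rcases Nat.lt_trichotomy (m i) 1 with h0 | h0 | h0
      · have : m i = 0 := by omega
        rw [this] at h5
        omega
      · exact h0.symm
      · have : q * 2 ≤ q * m i := Nat.mul_le_mul_left _ h0
        omega
  · rfl

/-- the standard splitting `g ↦ Tr((x₁⋯xₙ)^{p-1}·g)` is a Frobenius splitting
of `𝔽_p[x₁,…,xₙ]`, and an ideal is compatibly split by it iff it is a squarefree monomial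
(Stanley–Reisner) ideal. -/
theorem stmt_7 {p : ℕ} (hp : p.Prime) {n : ℕ} (hn : 1 ≤ n) :
    IsFrobeniusSplitting p
        (fun g => Tr p n ((∏ i, (X i : MvPolynomial (Fin n) (ZMod p))) ^ (p - 1) * g)) ∧
      ∀ I : Ideal (MvPolynomial (Fin n) (ZMod p)),
        (∀ g ∈ I, Tr p n ((∏ i, (X i : MvPolynomial (Fin n) (ZMod p))) ^ (p - 1) * g) ∈ I)
          ↔ IsSqfreeMonomialIdeal I := by
  refine ⟨⟨stdPhi_add hp, stdPhi_pow_mul hp, stdPhi_one hp⟩, fun I => ⟨fun h => ?_, ?_⟩⟩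
  · refine ⟨{s | ∏ i ∈ s, (X i : MvPolynomial (Fin n) (ZMod p)) ∈ I}, le_antisymm ?_ ?_⟩
    · intro g hg
      rw [mem_span_sq]
      intro u hu
      refine ⟨u.support, ?_, ?_⟩
      · rw [Set.mem_setOf_eq, prod_X_eq]
        exact stdPhi_sq_mem hp I h g hg u hu
      · intro i
        rw [sqInd_apply]
        split_ifs with hi
        · exact Nat.one_le_iff_ne_zero.mpr (Finsupp.mem_support_iff.mp hi)
        · exact Nat.zero_le _
    · rw [Ideal.span_le]
      rintro _ ⟨s, hs, rfl⟩
      exact hs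
  · rintro ⟨S, rfl⟩ g hg
    change stdPhi p n g ∈ _
    rw [mem_span_sq] at hg ⊢
    intro u hu
    rw [mem_support_iff, coeff_stdPhi hp] at hu
    obtain ⟨s, hs, hsu⟩ := hg _ (mem_support_iff.mpr hu)
    refine ⟨s, hs, fun i => ?_⟩
    have h1 := hsu i
    rw [sqInd_apply] at h1 ⊢
    split_ifs at h1 ⊢ with hi
    · rw [Nat.one_le_iff_ne_zero]
      intro h0
      simp [h0] at h1
    · exact Nat.zero_le _
end

section
/- Let p be a prime, n ≥ 1, and f ∈ 𝔽_p[x₁,…,xₙ] a polynomial of total degree at most n. Then Tr(f^{p−1}) is the constant polynomial whose value is the coefficient of the monomial ∏ᵢ₌₁ⁿ xᵢ^{p−1} in f^{p−1}. -/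
open MvPolynomial

/-- if `deg f ≤ n`, then `Tr(f^{p-1})` is the constant polynomial whose value
is the coefficient of `∏ᵢ xᵢ^{p-1}` in `f^{p-1}`. -/
theorem stmt_8 {p : ℕ} (hp : p.Prime) {n : ℕ} (hn : 1 ≤ n)
    (f : MvPolynomial (Fin n) (ZMod p)) (hdeg : f.totalDegree ≤ n) :
    Tr p n (f ^ (p - 1)) =
      C ((f ^ (p - 1)).coeff (Finsupp.equivFunOnFinite.symm fun _ : Fin n => p - 1)) := by
  have hp0 : 0 < p := hp.pos
  set g := f ^ (p - 1) with hg
  have hgdeg : g.totalDegree ≤ (p - 1) * n :=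
    (totalDegree_pow f (p - 1)).trans (Nat.mul_le_mul_left _ hdeg)
  set e : Fin n →₀ ℕ := Finsupp.equivFunOnFinite.symm fun _ : Fin n => p - 1 with he
  have hei : ∀ i, e i = p - 1 := fun i => rfl
  have key : ∀ m ∈ g.support, (∀ i, p ∣ (m i + 1)) → m = e := by
    intro m hm hd
    have hge : ∀ i, p - 1 ≤ m i := fun i => by
      have := Nat.le_of_dvd (Nat.succ_pos _) (hd i)
      omega
    have h1 : ∑ i, m i ≤ (p - 1) * n := by
      have h2 := le_totalDegree hm
      rw [Finsupp.sum_fintype _ _ (fun _ => rfl)] at h2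
      exact h2.trans hgdeg
    have h3 : ∑ i : Fin n, (p - 1) = ∑ i, m i := by
      apply le_antisymm (Finset.sum_le_sum fun i _ => hge i)
      simpa [mul_comm] using h1
    have h4 := (Finset.sum_eq_sum_iff_of_le (fun i _ => hge i)).1 h3
    ext i
    rw [hei]
    exact (h4 i (Finset.mem_univ i)).symm
  unfold Tr
  rw [Finset.sum_eq_single e]
  · have h5 : ∀ i, p ∣ e i + 1 := fun i => by
      rw [hei, Nat.sub_add_cancel hp0]
    rw [if_pos h5]
    have h6 : (Finsupp.equivFunOnFinite.symm fun i => (e i + 1) / p - 1 : Fin n →₀ ℕ) = 0 := by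
      ext i
      change (e i + 1) / p - 1 = 0
      rw [hei, Nat.sub_add_cancel hp0, Nat.div_self hp0]
    rw [h6]
    rfl
  · intro m hm hne
    exact if_neg fun h => hne (key m hm h)
  · intro hne
    rw [notMem_support_iff.1 hne]
    simp
end

section
/- Let p be a prime, n > 0, and f ∈ 𝔽_p[x₁,…,xₙ] a polynomial of total degree at most n. Then the number of points v ∈ 𝔽_pⁿ with f(v) = 0 is congruent modulo p to (−1)^{n−1}·c, where c ∈ 𝔽_p is the coefficient of the monomial ∏ᵢ₌₁ⁿ xᵢ^{p−1} in f^{p−1}. -/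
open MvPolynomial

/-- Sum over `𝔽_p` of the top power. -/
lemma sum_pow_top (p : ℕ) [Fact p.Prime] : ∑ a : ZMod p, a ^ (p - 1) = -1 := by
  have hp : p.Prime := Fact.out
  have h : ∀ a : ZMod p, a ^ (p - 1) = 1 - (if a = 0 then 1 else 0) := by
    intro a
    split_ifs with ha
    · rw [ha, zero_pow (by have := hp.two_le; omega), sub_self]
    · rw [ZMod.pow_card_sub_one_eq_one ha, sub_zero]
  rw [Finset.sum_congr rfl fun a _ => h a, Finset.sum_sub_distrib]
  simp

/-- for `f ∈ 𝔽_p[x₁,…,xₙ]` of total degree at most `n > 0`, the number of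
points `v ∈ 𝔽_pⁿ` with `f(v) = 0` is congruent mod `p` to `(−1)^{n−1}·c`, where `c` is
the coefficient of `∏ᵢ xᵢ^{p−1}` in `f^{p−1}`. -/
theorem stmt_9 {p : ℕ} (hp : p.Prime) {n : ℕ} (hn : 0 < n)
    (f : MvPolynomial (Fin n) (ZMod p)) (hdeg : f.totalDegree ≤ n) :
    (Nat.card {v : Fin n → ZMod p // eval v f = 0} : ZMod p) =
      (-1) ^ (n - 1) *
        (f ^ (p - 1)).coeff (Finsupp.equivFunOnFinite.symm fun _ : Fin n => p - 1) := by
  classical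
  haveI : Fact p.Prime := ⟨hp⟩
  set D : Fin n →₀ ℕ := Finsupp.equivFunOnFinite.symm fun _ : Fin n => p - 1 with hD
  set g := f ^ (p - 1) with hg
  have hgdeg : g.totalDegree ≤ (p - 1) * n :=
    (totalDegree_pow f (p - 1)).trans (Nat.mul_le_mul_left _ hdeg)
  have hcard : (Nat.card {v : Fin n → ZMod p // eval v f = 0} : ZMod p)
      = - ∑ v : Fin n → ZMod p, eval v g := by
    have h : ∀ v : Fin n → ZMod p, eval v g = 1 - (if eval v f = 0 then 1 else 0) := by
      intro v
      rw [hg, map_pow]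
      split_ifs with ha
      · rw [ha, zero_pow (by have := hp.two_le; omega), sub_self]
      · rw [ZMod.pow_card_sub_one_eq_one ha, sub_zero]
    rw [Finset.sum_congr rfl fun a _ => h a, Finset.sum_sub_distrib, Nat.card_eq_fintype_card,
      Fintype.card_subtype]
    simp [hn.ne']
  have hmono : ∀ d : Fin n →₀ ℕ, ∑ v : Fin n → ZMod p, ∏ i, v i ^ d i
      = ∏ i, ∑ a : ZMod p, a ^ d i := by
    intro d
    rw [Finset.prod_univ_sum, Fintype.piFinset_univ]
  have hsum : ∑ v : Fin n → ZMod p, eval v g = g.coeff D * (-1) ^ n := by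
    simp only [eval_eq']
    rw [Finset.sum_comm]
    simp only [← Finset.mul_sum, hmono]
    rw [Finset.sum_eq_single D]
    · simp [hD, sum_pow_top]
    · intro d hd hne
      obtain ⟨i, hi⟩ : ∃ i, d i < p - 1 := by
        by_contra! hcon
        apply hne
        have h1 : ∑ i, d i ≤ (p - 1) * n := by
          have := le_totalDegree hd
          rw [Finsupp.sum_fintype _ _ (fun _ => rfl)] at this
          exact this.trans hgdeg
        have h2 : ∑ i : Fin n, (p - 1) = ∑ i, d i := by
          apply le_antisymm (Finset.sum_le_sum fun i _ => hcon i)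
          simpa [mul_comm] using h1
        have h3 := (Finset.sum_eq_sum_iff_of_le (fun i _ => hcon i)).1 h2
        ext i
        simpa [hD] using (h3 i (Finset.mem_univ i)).symm
      rw [Finset.prod_eq_zero (Finset.mem_univ i), mul_zero]
      apply FiniteField.sum_pow_lt_card_sub_one
      simpa [ZMod.card] using hi
    · intro h
      rw [notMem_support_iff.1 h, zero_mul]
  rw [hcard, hsum]
  obtain ⟨m, rfl⟩ : ∃ m, n = m + 1 := ⟨n - 1, by omega⟩
  rw [Nat.add_sub_cancel, pow_succ]
  ring
end

section
/- Let p be a prime, n > 0, m ≥ 1, and f₁,…,f_m ∈ 𝔽_p[x₁,…,xₙ] nonconstant polynomials (each of total degree > 0) such that f := ∏ᵢ₌₁^m fᵢ has total degree at most n. Then the number of points v ∈ 𝔽_pⁿ with f₁(v) = f₂(v) = ⋯ = f_m(v) = 0 is congruent modulo p to (−1)^{n−m}·c, where c ∈ 𝔽_p is the coefficient of the monomial ∏ᵢ₌₁ⁿ xᵢ^{p−1} in f^{p−1}. -/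
open MvPolynomial

lemma aux_sum_eval {p : ℕ} [Fact p.Prime] {n : ℕ} (g : MvPolynomial (Fin n) (ZMod p))
    (hg : g.totalDegree ≤ (p - 1) * n) :
    ∑ x, eval x g = (-1) ^ n * g.coeff
      (Finsupp.equivFunOnFinite.symm fun _ : Fin n => p - 1) := by
  set e : Fin n →₀ ℕ := Finsupp.equivFunOnFinite.symm fun _ : Fin n => p - 1 with he
  have hmon : ∀ d : Fin n →₀ ℕ,
      ∑ x : Fin n → ZMod p, ∏ i, x i ^ d i = ∏ i, ∑ a : ZMod p, a ^ d i := by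
    intro d
    rw [Finset.prod_univ_sum, Fintype.piFinset_univ]
  have hlt : ∀ k, k < p - 1 → ∑ a : ZMod p, a ^ k = 0 := by
    intro k hk
    apply FiniteField.sum_pow_lt_card_sub_one
    rwa [ZMod.card]
  have htop : ∑ a : ZMod p, a ^ (p - 1) = -1 := by
    have h2 := (Fact.out : p.Prime).two_le
    have : ∀ a : ZMod p, a ^ (p - 1) = 1 - if a = 0 then 1 else 0 := by
      intro a
      split_ifs with h
      · rw [h, zero_pow (by omega)]; simp
      · rw [ZMod.pow_card_sub_one_eq_one h]; simp
    simp only [this, Finset.sum_sub_distrib]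
    simp
  calc
    ∑ x, eval x g = ∑ x : Fin n → ZMod p, ∑ d ∈ g.support, g.coeff d * ∏ i, x i ^ d i := by
      simp only [eval_eq']
    _ = ∑ d ∈ g.support, ∑ x : Fin n → ZMod p, g.coeff d * ∏ i, x i ^ d i := Finset.sum_comm
    _ = ∑ d ∈ g.support, g.coeff d * ∏ i, ∑ a : ZMod p, a ^ d i := by
      simp only [← Finset.mul_sum, hmon]
    _ = g.coeff e * ∏ i, ∑ a : ZMod p, a ^ e i := by
      apply Finset.sum_eq_single e
      · intro d hd hne
        have hdd : ∑ i, d i ≤ (p - 1) * n := by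
          have := (le_totalDegree hd).trans hg
          rwa [Finsupp.sum_fintype _ _ (by simp)] at this
        have : ∃ i, d i < p - 1 := by
          by_contra! hc
          apply hne
          have h1 : ∑ i : Fin n, (p - 1) = ∑ i, d i := by
            apply le_antisymm (Finset.sum_le_sum fun i _ => hc i)
            simpa [mul_comm] using hdd
          rw [Finset.sum_eq_sum_iff_of_le (fun i _ => hc i)] at h1
          ext i
          simpa [he] using (h1 i (Finset.mem_univ i)).symm
        obtain ⟨i, hi⟩ := this
        rw [Finset.prod_eq_zero (Finset.mem_univ i) (hlt _ hi), mul_zero]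
      · intro h
        rw [notMem_support_iff.mp h, zero_mul]
    _ = _ := by
      simp [he, htop, mul_comm]

/-- for nonconstant `f₁,…,f_m ∈ 𝔽_p[x₁,…,xₙ]` whose product `f` has total
degree at most `n > 0`, the number of common zeros `v ∈ 𝔽_pⁿ` of `f₁,…,f_m` is congruent
mod `p` to `(−1)^{n−m}·c`, where `c` is the coefficient of `∏ᵢ xᵢ^{p−1}` in `f^{p−1}`. -/
theorem stmt_10 {p : ℕ} (hp : p.Prime) {n : ℕ} (hn : 0 < n) {m : ℕ} (hm : 1 ≤ m)
    (fs : Fin m → MvPolynomial (Fin n) (ZMod p))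
    (hfs : ∀ i, 0 < (fs i).totalDegree)
    (hdeg : (∏ i, fs i).totalDegree ≤ n) :
    (Nat.card {v : Fin n → ZMod p // ∀ i, eval v (fs i) = 0} : ZMod p) =
      (-1) ^ (n - m) *
        ((∏ i, fs i) ^ (p - 1)).coeff
          (Finsupp.equivFunOnFinite.symm fun _ : Fin n => p - 1) := by
  haveI : Fact p.Prime := ⟨hp⟩
  have h2 := hp.two_le
  have hne : ∀ i, fs i ≠ 0 := by
    intro i h
    have := hfs i
    simp [h] at this
  have hprod : ∀ t : Finset (Fin m),
      (∏ i ∈ t, fs i).totalDegree = ∑ i ∈ t, (fs i).totalDegree := by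
    intro t
    induction t using Finset.induction_on with
    | empty => simp
    | insert a s ha ih =>
      rw [Finset.prod_insert ha, Finset.sum_insert ha,
        totalDegree_mul_of_isDomain (hne a) (Finset.prod_ne_zero_iff.mpr fun i _ => hne i), ih]
  rw [hprod] at hdeg
  have hmn : m ≤ n := by
    refine le_trans ?_ hdeg
    calc m = ∑ i : Fin m, 1 := by simp
      _ ≤ _ := Finset.sum_le_sum fun i _ => hfs i
  have hcard : (Nat.card {v : Fin n → ZMod p // ∀ i, eval v (fs i) = 0} : ZMod p) =
      ∑ x : Fin n → ZMod p, ∏ i, (1 - eval x (fs i) ^ (p - 1)) := by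
    classical
    rw [Nat.card_eq_fintype_card, Fintype.card_subtype, Finset.card_filter, Nat.cast_sum]
    refine Finset.sum_congr rfl fun x _ => ?_
    split_ifs with h
    · rw [Finset.prod_eq_one]
      · simp
      · intro i _
        rw [h i, zero_pow (by omega), sub_zero]
    · push Not at h
      obtain ⟨i, hi⟩ := h
      rw [Finset.prod_eq_zero (Finset.mem_univ i)]
      · simp
      · rw [ZMod.pow_card_sub_one_eq_one hi, sub_self]
  have hexp : ∀ x : Fin n → ZMod p, ∏ i, (1 - eval x (fs i) ^ (p - 1)) =
      ∑ t : Finset (Fin m), (-1) ^ t.card * eval x ((∏ i ∈ t, fs i) ^ (p - 1)) := by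
    intro x
    simp only [sub_eq_add_neg]
    rw [Finset.prod_one_add]
    simp [Finset.prod_neg, Finset.prod_pow, map_prod]
  rw [hcard]
  simp only [hexp]
  rw [Finset.sum_comm]
  simp only [← Finset.mul_sum]
  rw [Finset.sum_eq_single Finset.univ]
  · rw [aux_sum_eval]
    · rw [Finset.card_univ, Fintype.card_fin, ← mul_assoc, ← pow_add]
      congr 1
      obtain ⟨k, rfl⟩ := Nat.exists_eq_add_of_le hmn
      rw [show m + (m + k) = 2 * m + k by ring, pow_add, pow_mul]
      simp
    · refine (totalDegree_pow _ _).trans ?_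
      rw [hprod]
      exact Nat.mul_le_mul_left _ hdeg
  · intro t _ ht
    rw [MvPolynomial.sum_eval_eq_zero, mul_zero]
    refine (totalDegree_pow _ _).trans_lt ?_
    rw [hprod, ZMod.card, Fintype.card_fin]
    apply Nat.mul_lt_mul_of_pos_left _ (by omega)
    refine lt_of_lt_of_le ?_ hdeg
    obtain ⟨j, hj⟩ : ∃ j, j ∉ t := by
      by_contra! hc
      exact ht (Finset.eq_univ_iff_forall.mpr hc)
    exact Finset.sum_lt_sum_of_subset (Finset.subset_univ t) (Finset.mem_univ j) hj (hfs j)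
      (fun _ _ _ => Nat.zero_le _)
  · simp
end

section
/- Let p be a prime, n ≥ 1, and f ∈ 𝔽_p[x₁,…,xₙ] a polynomial of total degree at most n. If the vector (1,1,…,1) ∈ ℝⁿ does not lie in the Newton polytope of f, i.e. in the convex hull in ℝⁿ of the exponent vectors of the monomials appearing in f with nonzero coefficient, then Tr(f^{p−1}) = 0. -/
open MvPolynomial

theorem mem_hull_of_mem_support_pow {p n : ℕ} (f : MvPolynomial (Fin n) (ZMod p)) (k : ℕ) :
    ∀ m ∈ (f ^ (k + 1)).support,
      (fun i : Fin n => (m i : ℝ) / ((k : ℝ) + 1)) ∈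
      convexHull ℝ ((fun m : Fin n →₀ ℕ => fun i : Fin n => (m i : ℝ)) ''
        (f.support : Set (Fin n →₀ ℕ))) := by
  classical
  induction k with
  | zero =>
    intro m hm
    rw [zero_add, pow_one] at hm
    apply subset_convexHull
    exact ⟨m, hm, by simp⟩
  | succ k ih =>
    intro m hm
    rw [pow_succ] at hm
    obtain ⟨a, ha, b, hb, rfl⟩ := Finset.mem_add.mp (MvPolynomial.support_mul _ _ hm)
    have h1 := ih a ha
    have h2 := subset_convexHull ℝ _ (Set.mem_image_of_mem
      (fun m : Fin n →₀ ℕ => fun i : Fin n => (m i : ℝ)) (Finset.mem_coe.mpr hb))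
    have hk : (0 : ℝ) < (k : ℝ) + 1 := by positivity
    have hk2 : (0 : ℝ) < (k : ℝ) + 1 + 1 := by positivity
    have h3 := convex_convexHull ℝ _ h1 h2
      (a := ((k : ℝ) + 1) / ((k : ℝ) + 1 + 1)) (b := 1 / ((k : ℝ) + 1 + 1))
      (by positivity) (by positivity) (by field_simp)
    convert h3 using 1
    funext i
    simp only [Pi.add_apply, Pi.smul_apply, smul_eq_mul, Finsupp.add_apply]
    push_cast
    field_simp

/-- if `(1,…,1)` does not lie in the Newton polytope of `f` (the convex hull
in `ℝⁿ` of the exponent vectors of the monomials of `f`), and `deg f ≤ n`, then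
`Tr(f^{p−1}) = 0`. -/
theorem stmt_11 {p : ℕ} (hp : p.Prime) {n : ℕ} (hn : 1 ≤ n)
    (f : MvPolynomial (Fin n) (ZMod p)) (hdeg : f.totalDegree ≤ n)
    (hnewton : (fun _ : Fin n => (1 : ℝ)) ∉
      convexHull ℝ ((fun m : Fin n →₀ ℕ => fun i : Fin n => (m i : ℝ)) ''
        (f.support : Set (Fin n →₀ ℕ)))) :
    Tr p n (f ^ (p - 1)) = 0 := by
  obtain ⟨k, rfl⟩ : ∃ k, p = k + 2 := ⟨p - 2, by have := hp.two_le; omega⟩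
  have e : k + 2 - 1 = k + 1 := rfl
  rw [e]
  unfold Tr
  apply Finset.sum_eq_zero
  intro m hm
  rw [if_neg]
  intro hdiv
  have hge : ∀ i ∈ Finset.univ, k + 1 ≤ m i := fun i _ => by
    have := Nat.le_of_dvd (Nat.succ_pos _) (hdiv i)
    omega
  have hsum : ∑ i, m i ≤ ∑ _i : Fin n, (k + 1) := by
    have h1 := MvPolynomial.le_totalDegree hm
    have h2 := MvPolynomial.totalDegree_pow f (k + 1)
    have h3 : (k + 1) * f.totalDegree ≤ (k + 1) * n := Nat.mul_le_mul_left _ hdeg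
    rw [Finsupp.sum_fintype _ _ (fun _ => rfl)] at h1
    simp only [Finset.sum_const, Finset.card_univ, Fintype.card_fin, smul_eq_mul]
    rw [mul_comm n]
    exact h1.trans (h2.trans h3)
  have heq := (Finset.sum_eq_sum_iff_of_le hge).mp (le_antisymm (Finset.sum_le_sum hge) hsum)
  apply hnewton
  convert mem_hull_of_mem_support_pow f k m hm using 1
  funext i
  rw [← heq i (Finset.mem_univ i)]
  have hk : (k : ℝ) + 1 ≠ 0 := by positivity
  push_cast
  field_simp
end

section
/- Let p be a prime, n ≥ 1, and f ∈ 𝔽_p[x₁,…,xₙ] a polynomial of total degree at most n. Let λ be a weighting such that the monomial x₁x₂⋯xₙ appears in f with nonzero coefficient and its λ-weight λ₁+⋯+λₙ equals the maximal λ-weight among the exponent vectors of f (i.e. x₁⋯xₙ appears in init_λ(f)). Then Tr(f^{p−1}) = Tr((init_λ f)^{p−1}). In particular, for c ∈ 𝔽_p, the map g ↦ c·Tr(f^{p−1}·g) is a Frobenius splitting of 𝔽_p[x₁,…,xₙ] if and only if g ↦ c·Tr((init_λ f)^{p−1}·g) is. -/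
open MvPolynomial

/-- The `λ`-weight of an exponent vector `m` is `∑ᵢ λᵢ·mᵢ`. -/
def wtOf {n : ℕ} (lam : Fin n → ℕ) (m : Fin n →₀ ℕ) : ℕ := ∑ i, lam i * m i

/-- The leading form `init_λ(g)`: the sum of the terms of `g` of maximal `λ`-weight. -/
noncomputable def initForm {R : Type*} [CommRing R] {n : ℕ} (lam : Fin n → ℕ)
    (g : MvPolynomial (Fin n) R) : MvPolynomial (Fin n) R :=
  ∑ m ∈ g.support.filter (fun m => ∀ m' ∈ g.support, wtOf lam m' ≤ wtOf lam m),
    MvPolynomial.monomial m (g.coeff m)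

/-- The initial ideal `init_λ(I)`, spanned by the leading forms of the nonzero
elements of `I`. -/
noncomputable def initIdeal {R : Type*} [CommRing R] {n : ℕ} (lam : Fin n → ℕ)
    (I : Ideal (MvPolynomial (Fin n) R)) : Ideal (MvPolynomial (Fin n) R) :=
  Ideal.span {h | ∃ g ∈ I, g ≠ 0 ∧ initForm lam g = h}


/-- The exponent vector `p * m + (p - 1)`. -/
noncomputable def expand12 (p : ℕ) {n : ℕ} (m : Fin n →₀ ℕ) : Fin n →₀ ℕ :=
  Finsupp.equivFunOnFinite.symm fun i => p * m i + (p - 1)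

theorem expand12_apply (p : ℕ) {n : ℕ} (m : Fin n →₀ ℕ) (i : Fin n) :
    expand12 p m i = p * m i + (p - 1) := rfl

theorem coeff_Tr12 {p : ℕ} (hp : p.Prime) {n : ℕ} (g : MvPolynomial (Fin n) (ZMod p))
    (m : Fin n →₀ ℕ) : (Tr p n g).coeff m = g.coeff (expand12 p m) := by
  classical
  have hp1 := hp.pos
  have key : ∀ u : Fin n →₀ ℕ,
      coeff m (if ∀ i, p ∣ (u i + 1) then
        monomial (Finsupp.equivFunOnFinite.symm fun i => (u i + 1) / p - 1) (g.coeff u)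
        else 0) = if u = expand12 p m then g.coeff u else 0 := by
    intro u
    by_cases h : ∀ i, p ∣ (u i + 1)
    · rw [if_pos h, coeff_monomial]
      congr 1
      apply propext
      constructor
      · intro e
        ext i
        have e1 : (u i + 1) / p - 1 = m i := by rw [← e]; rfl
        obtain ⟨k, hk⟩ := h i
        rw [expand12_apply, ← e1, hk, Nat.mul_div_cancel_left _ hp1]
        rcases k with _ | k
        · omega
        · rw [Nat.mul_succ] at hk
          simp only [Nat.add_sub_cancel]
          omega
      · intro e
        ext i
        change (u i + 1) / p - 1 = m i
        have : u i + 1 = p * (m i + 1) := by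
          rw [e, expand12_apply, Nat.mul_succ]; omega
        rw [this, Nat.mul_div_cancel_left _ hp1]; rfl
    · rw [if_neg h, if_neg]
      · simp
      · rintro rfl
        apply h
        intro i
        refine ⟨m i + 1, ?_⟩
        rw [expand12_apply, Nat.mul_succ]; omega
  rw [Tr, coeff_sum, Finset.sum_congr rfl (fun u _ => key u), Finset.sum_ite_eq']
  split_ifs with h
  · rfl
  · exact (notMem_support_iff.mp h).symm

theorem Tr_add12 {p : ℕ} (hp : p.Prime) {n : ℕ} (a b : MvPolynomial (Fin n) (ZMod p)) :
    Tr p n (a + b) = Tr p n a + Tr p n b := by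
  ext m
  simp [coeff_Tr12 hp]

theorem Tr_pow_mul12 {p : ℕ} (hp : p.Prime) {n : ℕ} (a b : MvPolynomial (Fin n) (ZMod p)) :
    Tr p n (a ^ p * b) = a * Tr p n b := by
  classical
  have : Fact p.Prime := ⟨hp⟩
  induction a using MvPolynomial.induction_on' with
  | add x y hx hy => rw [add_pow_char, add_mul, Tr_add12 hp, hx, hy, add_mul]
  | monomial u c =>
    ext m
    rw [coeff_Tr12 hp, monomial_pow, ZMod.pow_card, coeff_monomial_mul', coeff_monomial_mul',
      coeff_Tr12 hp]
    have hp1 := hp.pos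
    have h : (p • u ≤ expand12 p m) ↔ u ≤ m := by
      simp only [Finsupp.le_def, expand12_apply, Finsupp.smul_apply, smul_eq_mul]
      refine forall_congr' fun i => ⟨fun h => ?_, fun h => ?_⟩
      · by_contra hc
        have : p * (m i + 1) ≤ p * u i := Nat.mul_le_mul_left p (by omega)
        rw [Nat.mul_succ] at this
        omega
      · exact (Nat.mul_le_mul_left p h).trans (Nat.le_add_right _ _)
    by_cases hu : u ≤ m
    · rw [if_pos hu, if_pos (h.2 hu)]
      congr 2
      ext i
      have := Nat.mul_le_mul_left p (hu i)
      simp only [expand12_apply, Finsupp.tsub_apply, Finsupp.smul_apply, smul_eq_mul,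
        Nat.mul_sub]
      omega
    · rw [if_neg hu, if_neg (fun h' => hu (h.1 h'))]

theorem wtOf_add12 {n : ℕ} (lam : Fin n → ℕ) (a b : Fin n →₀ ℕ) :
    wtOf lam (a + b) = wtOf lam a + wtOf lam b := by
  simp [wtOf, mul_add, Finset.sum_add_distrib]

/-- `G` is the weight-`A` part of `F`, and `F` has weights at most `A`. -/
def Lead12 {R : Type*} [CommRing R] {n : ℕ} (lam : Fin n → ℕ) (A : ℕ)
    (F G : MvPolynomial (Fin n) R) : Prop :=
  (∀ m, A < wtOf lam m → F.coeff m = 0) ∧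
  (∀ m, wtOf lam m = A → G.coeff m = F.coeff m) ∧
  (∀ m, wtOf lam m ≠ A → G.coeff m = 0)

theorem Lead12.mul {R : Type*} [CommRing R] {n : ℕ} {lam : Fin n → ℕ} {A B : ℕ}
    {F G F' G' : MvPolynomial (Fin n) R} (h : Lead12 lam A F G) (h' : Lead12 lam B F' G') :
    Lead12 lam (A + B) (F * F') (G * G') := by
  classical
  obtain ⟨h1, h2, h3⟩ := h
  obtain ⟨k1, k2, k3⟩ := h'
  refine ⟨fun m hm => ?_, fun m hm => ?_, fun m hm => ?_⟩
  · rw [coeff_mul]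
    refine Finset.sum_eq_zero fun x hx => ?_
    rw [Finset.HasAntidiagonal.mem_antidiagonal] at hx
    rw [← hx, wtOf_add12] at hm
    by_cases c : A < wtOf lam x.1
    · rw [h1 _ c, zero_mul]
    · rw [k1 x.2 (by omega), mul_zero]
  · rw [coeff_mul, coeff_mul]
    refine Finset.sum_congr rfl fun x hx => ?_
    rw [Finset.HasAntidiagonal.mem_antidiagonal] at hx
    rw [← hx, wtOf_add12] at hm
    rcases lt_trichotomy A (wtOf lam x.1) with c | c | c
    · rw [h1 _ c, h3 _ (by omega), zero_mul, zero_mul]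
    · rw [h2 _ c.symm, k2 _ (by omega)]
    · rw [k1 x.2 (by omega), h3 _ (by omega), zero_mul, mul_zero]
  · rw [coeff_mul]
    refine Finset.sum_eq_zero fun x hx => ?_
    rw [Finset.HasAntidiagonal.mem_antidiagonal] at hx
    rw [← hx, wtOf_add12] at hm
    by_cases c : wtOf lam x.1 = A
    · rw [k3 x.2 (by omega), mul_zero]
    · rw [h3 _ c, zero_mul]

theorem Lead12.pow {R : Type*} [CommRing R] {n : ℕ} {lam : Fin n → ℕ} {A : ℕ}
    {F G : MvPolynomial (Fin n) R} (h : Lead12 lam A F G) (k : ℕ) :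
    Lead12 lam (k * A) (F ^ k) (G ^ k) := by
  classical
  induction k with
  | zero =>
    have e : ∀ m : Fin n →₀ ℕ, wtOf lam m ≠ 0 → (1 : MvPolynomial (Fin n) R).coeff m = 0 := by
      intro m hm
      rw [coeff_one, if_neg]
      rintro rfl
      exact hm (by simp [wtOf])
    simp only [Nat.zero_mul, pow_zero]
    exact ⟨fun m hm => e m (by omega), fun _ _ => rfl, e⟩
  | succ k ih =>
    rw [pow_succ, pow_succ, Nat.succ_mul]
    exact ih.mul h

theorem coeff_initForm12 {R : Type*} [CommRing R] {n : ℕ} (lam : Fin n → ℕ)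
    (g : MvPolynomial (Fin n) R) (m : Fin n →₀ ℕ) :
    (initForm lam g).coeff m =
      if m ∈ g.support ∧ ∀ m' ∈ g.support, wtOf lam m' ≤ wtOf lam m then g.coeff m else 0 := by
  classical
  rw [initForm, coeff_sum]
  simp only [coeff_monomial]
  rw [Finset.sum_ite_eq']
  simp only [Finset.mem_filter]

theorem coeff_expand_eq_zero12 {p : ℕ} (hp : p.Prime) {n : ℕ}
    (f : MvPolynomial (Fin n) (ZMod p)) (hdeg : f.totalDegree ≤ n) (m : Fin n →₀ ℕ)
    (hm : m ≠ 0) : (f ^ (p - 1)).coeff (expand12 p m) = 0 := by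
  apply coeff_eq_zero_of_totalDegree_lt
  refine (totalDegree_pow f (p - 1)).trans_lt ?_
  have e : ∑ i ∈ (expand12 p m).support, expand12 p m i = ∑ i, expand12 p m i :=
    Finset.sum_subset (Finset.subset_univ _) (fun i _ hi => Finsupp.notMem_support_iff.mp hi)
  rw [e]
  refine (Nat.mul_le_mul_left _ hdeg).trans_lt ?_
  have e2 : (p - 1) * n = ∑ i : Fin n, (p - 1) := by simp [mul_comm]
  rw [e2]
  obtain ⟨i, hi⟩ := Finsupp.ne_iff.mp hm
  refine Finset.sum_lt_sum (fun j _ => Nat.le_add_left _ _) ⟨i, Finset.mem_univ _, ?_⟩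
  rw [expand12_apply]
  have := Nat.mul_pos hp.pos (Nat.pos_of_ne_zero hi)
  omega

/-- if `deg f ≤ n` and the monomial `x₁⋯xₙ` appears in `init_λ(f)`, then
`Tr(f^{p−1}) = Tr((init_λ f)^{p−1})`; in particular `g ↦ c·Tr(f^{p−1}·g)` is a Frobenius
splitting iff `g ↦ c·Tr((init_λ f)^{p−1}·g)` is. -/
theorem stmt_12 {p : ℕ} (hp : p.Prime) {n : ℕ} (hn : 1 ≤ n) (lam : Fin n → ℕ)
    (f : MvPolynomial (Fin n) (ZMod p)) (hdeg : f.totalDegree ≤ n)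
    (hmem : (Finsupp.equivFunOnFinite.symm fun _ : Fin n => 1) ∈ f.support)
    (hmax : ∀ m ∈ f.support,
      wtOf lam m ≤ wtOf lam (Finsupp.equivFunOnFinite.symm fun _ : Fin n => 1)) :
    Tr p n (f ^ (p - 1)) = Tr p n ((initForm lam f) ^ (p - 1)) ∧
      ∀ c : ZMod p,
        IsFrobeniusSplitting p (fun g => C c * Tr p n (f ^ (p - 1) * g)) ↔
          IsFrobeniusSplitting p (fun g => C c * Tr p n ((initForm lam f) ^ (p - 1) * g)) := by
  set o : Fin n →₀ ℕ := Finsupp.equivFunOnFinite.symm fun _ : Fin n => 1 with ho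
  have hL : Lead12 lam (wtOf lam o) f (initForm lam f) := by
    refine ⟨fun m hm => ?_, fun m hm => ?_, fun m hm => ?_⟩
    · by_contra hc
      exact absurd (hmax m (mem_support_iff.mpr hc)) (by omega)
    · rw [coeff_initForm12]
      split_ifs with h
      · rfl
      · by_contra hc
        refine h ⟨mem_support_iff.mpr (Ne.symm hc), fun m' hm' => ?_⟩
        rw [hm]; exact hmax m' hm'
    · rw [coeff_initForm12, if_neg]
      rintro ⟨h1, h2⟩
      exact hm (le_antisymm (hmax m h1) (h2 o hmem))
  have hdeg' : (initForm lam f).totalDegree ≤ n := by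
    refine le_trans (Finset.sup_mono ?_) hdeg
    intro m hm
    rw [mem_support_iff, coeff_initForm12] at hm
    by_contra hc
    exact hm (if_neg fun h => hc h.1)
  have hTr : Tr p n (f ^ (p - 1)) = Tr p n ((initForm lam f) ^ (p - 1)) := by
    ext m
    rw [coeff_Tr12 hp, coeff_Tr12 hp]
    by_cases hm : m = 0
    · subst hm
      refine ((hL.pow (p - 1)).2.1 _ ?_).symm
      simp only [wtOf, expand12_apply, ho, Finset.mul_sum]
      refine Finset.sum_congr rfl fun i _ => ?_
      simp [mul_comm]
    · rw [coeff_expand_eq_zero12 hp f hdeg m hm, coeff_expand_eq_zero12 hp _ hdeg' m hm]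
  refine ⟨hTr, fun c => ?_⟩
  have key : ∀ F : MvPolynomial (Fin n) (ZMod p),
      IsFrobeniusSplitting p (fun g => C c * Tr p n (F * g)) ↔ C c * Tr p n F = 1 := by
    intro F
    refine ⟨fun h => by simpa using h.2.2, fun h => ⟨fun a b => ?_, fun a b => ?_, ?_⟩⟩
    · simp only [mul_add, Tr_add12 hp]
    · simp only
      rw [mul_left_comm F, Tr_pow_mul12 hp, mul_left_comm]
    · simpa using h
  rw [key, key, hTr]
end
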